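/- Let (E,φ) be a finitely aligned product system of graphs over ℕ^k and {t_λ : λ ∈ E¹} a Toeplitz–Cuntz–Krieger E-family in a C*-algebra B. Then {t_λ} satisfies condition (†) if and only if for every v ∈ E⁰ and every choice of finite sets G_m ⊆ s_{e_m}⁻¹(v) (1 ≤ m ≤ k), the element ∏_{m=1}^k (t_v − ∑_{λ∈G_m} t_λ t_λ*) of B is nonzero. -/

import Mathlib

open scoped Classical

noncomputable section

namespace PSG

variable {G : Type*} [Group G] {Λ : Type*}

/-- `g ≤ h` in the left-invariant partial order induced by the submonoid `P`. -/
def qle (P : Submonoid G) (g h : G) : Prop := g⁻¹ * h ∈ P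

/-- `r` is a common upper bound of `p` and `q` in `P`. -/
def IsUB (P : Submonoid G) (p q r : G) : Prop := r ∈ P ∧ qle P p r ∧ qle P q r

/-- `r` is the least common upper bound of `p` and `q` in `P`. -/
def IsLUB2 (P : Submonoid G) (p q r : G) : Prop :=
  IsUB P p q r ∧ ∀ r', IsUB P p q r' → qle P r r'

/-- `r` is the least upper bound in `P` of the set of degrees `D`. -/
def IsLUBFam (P : Submonoid G) (D : Set G) (r : G) : Prop :=
  r ∈ P ∧ (∀ p ∈ D, qle P p r) ∧ ∀ r' ∈ P, (∀ p ∈ D, qle P p r') → qle P r r'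

/-- `(G, P)` is quasi-lattice ordered: `P ∩ P⁻¹ = {1}` and every pair of elements of `P`
with a common upper bound in `P` has a least upper bound in `P`. -/
def QuasiLatticeOrdered (P : Submonoid G) : Prop :=
  (∀ g ∈ P, g⁻¹ ∈ P → g = 1) ∧
    ∀ p ∈ P, ∀ q ∈ P, (∃ r, IsUB P p q r) → ∃ r, IsLUB2 P p q r

/-- A product system of graphs over `P`, encoded on a single edge set `Λ` (which contains the
vertices as the elements of degree `1`), with degree map `d`, source and range maps `src`, `rng`
(valued in vertices), and partial multiplication `mul` (meaningful when `rng a = src b`). -/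
structure IsProductSystem (P : Submonoid G) (d : Λ → G) (src rng : Λ → Λ)
    (mul : Λ → Λ → Λ) : Prop where
  countable : Countable Λ
  d_mem : ∀ a, d a ∈ P
  d_src : ∀ a, d (src a) = 1
  d_rng : ∀ a, d (rng a) = 1
  src_vertex : ∀ v, d v = 1 → src v = v
  rng_vertex : ∀ v, d v = 1 → rng v = v
  d_mul : ∀ a b, rng a = src b → d (mul a b) = d a * d b
  src_mul : ∀ a b, rng a = src b → src (mul a b) = src a
  rng_mul : ∀ a b, rng a = src b → rng (mul a b) = rng b
  mul_assoc' : ∀ a b c, rng a = src b → rng b = src c →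
    mul (mul a b) c = mul a (mul b c)
  src_mul_self : ∀ a, mul (src a) a = a
  mul_rng_self : ∀ a, mul a (rng a) = a
  factor : ∀ p q : G, p ∈ P → q ∈ P → ∀ c, d c = p * q →
    ∃! ab : Λ × Λ, d ab.1 = p ∧ d ab.2 = q ∧ rng ab.1 = src ab.2 ∧ mul ab.1 ab.2 = c

/-- `a` is an initial segment of `c`: `c = a • b` for some (necessarily unique) `b`. -/
def IsInit (src rng : Λ → Λ) (mul : Λ → Λ → Λ) (a c : Λ) : Prop :=
  ∃ b, rng a = src b ∧ mul a b = c

/-- The set of minimal common extensions of `μ` and `ν`. -/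
def MCE (P : Submonoid G) (d : Λ → G) (src rng : Λ → Λ) (mul : Λ → Λ → Λ)
    (μ ν : Λ) : Set Λ :=
  {γ | IsInit src rng mul μ γ ∧ IsInit src rng mul ν γ ∧ IsLUB2 P (d μ) (d ν) (d γ)}

/-- The product system is finitely aligned. -/
def FinitelyAligned (P : Submonoid G) (d : Λ → G) (src rng : Λ → Λ)
    (mul : Λ → Λ → Λ) : Prop :=
  ∀ μ ν : Λ, (MCE P d src rng mul μ ν).Finite

/-- The set of minimal common extensions of a set `S` of edges. -/
def MCEset (P : Submonoid G) (d : Λ → G) (src rng : Λ → Λ) (mul : Λ → Λ → Λ)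
    (S : Set Λ) : Set Λ :=
  {γ | (∀ α ∈ S, IsInit src rng mul α γ) ∧ IsLUBFam P (d '' S) (d γ)}

/-- `∨F`: the union of `MCE(S)` over the nonempty subsets `S ⊆ F`. -/
def vee (P : Submonoid G) (d : Λ → G) (src rng : Λ → Λ) (mul : Λ → Λ → Λ)
    (F : Finset Λ) : Set Λ :=
  {γ | ∃ S : Finset Λ, S.Nonempty ∧ S ⊆ F ∧ γ ∈ MCEset P d src rng mul ↑S}

/-- Given that `a` is an initial segment of `c`, the (unique) complementary segment;
junk value `c` otherwise. -/
def tail (src rng : Λ → Λ) (mul : Λ → Λ → Λ) (a c : Λ) : Λ :=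
  if h : IsInit src rng mul a c then h.choose else c

section CstarFamilies

variable (P : Submonoid G) (d : Λ → G) (src rng : Λ → Λ) (mul : Λ → Λ → Λ)
variable {B : Type*} [CStarAlgebra B] [PartialOrder B] [StarOrderedRing B]

/-- A Toeplitz `E`-family in a C*-algebra `B` (conditions (1)–(4)). -/
structure IsToeplitzFamily (t : Λ → B) : Prop where
  vertex_sa : ∀ v, d v = 1 → IsSelfAdjoint (t v)
  vertex_idem : ∀ v, d v = 1 → t v * t v = t v
  vertex_orth : ∀ v w, d v = 1 → d w = 1 → v ≠ w → t v * t w = 0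
  mul_eq : ∀ a b, rng a = src b → t a * t b = t (mul a b)
  star_mul_self : ∀ a, star (t a) * t a = t (rng a)
  dom : ∀ p : G, p ∈ P → p ≠ 1 → ∀ v, d v = 1 → ∀ F : Finset Λ,
    (∀ a ∈ F, d a = p ∧ src a = v) → (∑ a ∈ F, t a * star (t a)) ≤ t v

/-- The Nica-covariance/Cuntz–Krieger relation (5):
`tμ* tν = ∑_{γ = μα = νβ ∈ MCE(μ,ν)} tα tβ*`. -/
def TCKrel (t : Λ → B) : Prop :=
  ∀ μ ν : Λ, ∀ M : Finset Λ, ↑M = MCE P d src rng mul μ ν →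
    star (t μ) * t ν =
      ∑ γ ∈ M, t (tail src rng mul μ γ) * star (t (tail src rng mul ν γ))

/-- A Toeplitz–Cuntz–Krieger `E`-family: conditions (1)–(5). -/
def IsTCKFamily (t : Λ → B) : Prop :=
  IsToeplitzFamily P d src rng mul t ∧ TCKrel P d src rng mul t

/-- Condition (†): for every finite `R ⊆ P∖{1}`, every vertex `v`, and all finite sets
`F_p ⊆ s_p⁻¹(v)` (`p ∈ R`), the product `∏_{p ∈ R} (t_v − ∑_{a ∈ F_p} t_a t_a*)` is nonzero.
(The factors commute, so the product is stated for an arbitrary enumeration of `R`.) -/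
def Dagger (t : Λ → B) : Prop :=
  ∀ R : List G, R.Nodup → (∀ p ∈ R, p ∈ P ∧ p ≠ 1) →
    ∀ v, d v = 1 → ∀ Fp : G → Finset Λ,
      (∀ p ∈ R, ∀ a ∈ Fp p, d a = p ∧ src a = v) →
        (R.map fun p => t v - ∑ a ∈ Fp p, t a * star (t a)).prod ≠ 0

/-- The projection `Q^{∨F}_l = t_l t_l* ∏_{l α ∈ ∨F, d α ≠ 1} (t_{s(l)} − t_{lα} t_{lα}*)`.
(The factors commute, so the product is computed over an arbitrary enumeration.) -/
def Qproj (t : Λ → B) (F : Finset Λ) (l : Λ) : B :=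
  if h : {α : Λ | d α ≠ 1 ∧ rng l = src α ∧ mul l α ∈ vee P d src rng mul F}.Finite then
    t l * star (t l) *
      (h.toFinset.toList.map fun α =>
        t (src l) - t (mul l α) * star (t (mul l α))).prod
  else 0

end CstarFamilies

/-- The positive cone `ℕ^k` inside `ℤ^k` (written multiplicatively). -/
def posCone (k : ℕ) : Submonoid (Multiplicative (Fin k → ℤ)) where
  carrier := {g | ∀ i, 0 ≤ Multiplicative.toAdd g i}
  mul_mem' := by
    intro a b ha hb i
    simpa using add_nonneg (ha i) (hb i)
  one_mem' := by
    intro i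
    simp

/-- The `i`-th standard generator of `ℕ^k ⊆ ℤ^k`. -/
def egen (k : ℕ) (i : Fin k) : Multiplicative (Fin k → ℤ) :=
  Multiplicative.ofAdd (Pi.single i 1)

end PSG
namespace PSG

/-!
By relation (5) the range projections `t_μ t_μ*` commute, and they are orthogonal for distinct `μ`
of the same degree. So the gap projection `t_v - ∑_{λ ∈ F} t_λ t_λ*` becomes smaller when each path
of `F` is replaced by an initial segment of itself. Every nonzero `p ∈ ℕ^k` dominates some `e_m`;
truncating the paths of each `F_p` to such a degree gives finite sets `G_m` with
`∏_m (t_v - ∑_{λ ∈ G_m} t_λ t_λ*) ≤ ∏_p (t_v - ∑_{λ ∈ F_p} t_λ t_λ*)`, so the right-hand side is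
nonzero as soon as the left-hand side is.
-/

section ListProd

variable {M : Type*} [Monoid M] {x : M} {l : List M}

lemma list_prod_mul_eq_self (h : ∀ a ∈ l, a * x = x) : l.prod * x = x := by
  induction l with
  | nil => exact one_mul x
  | cons a l ih =>
    rw [List.prod_cons, mul_assoc, ih fun b hb => h b (List.mem_cons_of_mem a hb),
      h a List.mem_cons_self]

lemma mul_list_prod_eq_self_of_mem {a : M} (ha : a ∈ l) (hcomm : ∀ b ∈ l, ∀ c ∈ l, Commute b c)
    (hx : x * a = a) : x * l.prod = l.prod := by
  rw [← List.prod_erase_of_comm ha hcomm, ← mul_assoc, hx]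

end ListProd

section Order

variable {G : Type*} [Group G] {P : Submonoid G} {g h : G}

lemma qle_refl (P : Submonoid G) (g : G) : qle P g g := by
  rw [qle, inv_mul_cancel]
  exact P.one_mem

lemma qle_antisymm (hP : P.IsMulPointed) (hgh : qle P g h) (hhg : qle P h g) : g = h :=
  inv_mul_eq_one.mp (hP _ hgh (by rwa [mul_inv_rev, inv_inv]))

lemma IsLUB2.symm {p q r : G} (hr : IsLUB2 P p q r) : IsLUB2 P q p r :=
  ⟨⟨hr.1.1, hr.1.2.2, hr.1.2.1⟩, fun s hs => hr.2 s ⟨hs.1, hs.2.2, hs.2.1⟩⟩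

lemma IsLUB2.eq_of_self (hP : P.IsMulPointed) (hg : g ∈ P) (hh : IsLUB2 P g g h) : h = g :=
  qle_antisymm hP (hh.2 g ⟨hg, qle_refl P g, qle_refl P g⟩) hh.1.2.1

end Order

section Paths

variable {G Λ : Type*} [Group G] {P : Submonoid G} {d : Λ → G} {src rng : Λ → Λ} {mul : Λ → Λ → Λ}

lemma rng_eq_src_tail {a c : Λ} (h : IsInit src rng mul a c) :
    rng a = src (tail src rng mul a c) := by
  rw [tail, dif_pos h]
  exact h.choose_spec.1

lemma mul_tail {a c : Λ} (h : IsInit src rng mul a c) : mul a (tail src rng mul a c) = c := by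
  rw [tail, dif_pos h]
  exact h.choose_spec.2

lemma IsProductSystem.isInit_refl (hPS : IsProductSystem P d src rng mul) (a : Λ) :
    IsInit src rng mul a a :=
  ⟨rng a, (hPS.src_vertex _ (hPS.d_rng a)).symm, hPS.mul_rng_self a⟩

lemma IsProductSystem.eq_of_isInit_of_d_eq (hPS : IsProductSystem P d src rng mul) {a c : Λ}
    (h : IsInit src rng mul a c) (hd : d c = d a) : c = a := by
  obtain ⟨b, hab, rfl⟩ := h
  have hb : d b = 1 := by rwa [hPS.d_mul a b hab, mul_eq_left] at hd
  rw [← hPS.src_vertex b hb, ← hab, hPS.mul_rng_self]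

lemma IsProductSystem.exists_isInit (hPS : IsProductSystem P d src rng mul) {p : G} (hp : p ∈ P)
    {c : Λ} (hc : qle P p (d c)) : ∃ a, d a = p ∧ src a = src c ∧ IsInit src rng mul a c := by
  obtain ⟨⟨a, b⟩, ⟨ha, -, hab, rfl⟩, -⟩ := hPS.factor p (p⁻¹ * d c) hp hc c (by simp)
  exact ⟨a, ha, (hPS.src_mul a b hab).symm, b, hab, rfl⟩

lemma MCE_comm (P : Submonoid G) (d : Λ → G) (src rng : Λ → Λ) (mul : Λ → Λ → Λ) (μ ν : Λ) :
    MCE P d src rng mul μ ν = MCE P d src rng mul ν μ := by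
  ext γ
  exact ⟨fun ⟨hμ, hν, h⟩ => ⟨hν, hμ, h.symm⟩, fun ⟨hν, hμ, h⟩ => ⟨hμ, hν, h.symm⟩⟩

lemma IsProductSystem.MCE_eq_empty_of_d_eq (hPS : IsProductSystem P d src rng mul)
    (hP : P.IsMulPointed) {μ ν : Λ} (hd : d μ = d ν) (hne : μ ≠ ν) :
    MCE P d src rng mul μ ν = ∅ := by
  refine Set.eq_empty_of_forall_notMem fun γ ⟨hμ, hν, hlub⟩ => hne ?_
  have hγ : d γ = d μ := IsLUB2.eq_of_self hP (hPS.d_mem μ) (by rwa [← hd] at hlub)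
  rw [← hPS.eq_of_isInit_of_d_eq hμ hγ, hPS.eq_of_isInit_of_d_eq hν (hγ.trans hd)]

/-- `Refines src rng mul F F'` says that every path of `F` has an initial segment in `F'`, so that
the cylinder sets of the paths of `F` refine those of the paths of `F'`. It is the combinatorial
relation under which gap projections are compared. -/
def Refines (src rng : Λ → Λ) (mul : Λ → Λ → Λ) (F F' : Finset Λ) : Prop :=
  ∀ c ∈ F, ∃ a ∈ F', IsInit src rng mul a c

lemma IsProductSystem.refines_of_subset (hPS : IsProductSystem P d src rng mul) {F F' : Finset Λ}
    (h : F ⊆ F') : Refines src rng mul F F' :=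
  fun a ha => ⟨a, h ha, hPS.isInit_refl a⟩

lemma Refines.mono_left {F₁ F₂ F' : Finset Λ} (h : Refines src rng mul F₂ F') (hF : F₁ ⊆ F₂) :
    Refines src rng mul F₁ F' :=
  fun c hc => h c (hF hc)

lemma IsProductSystem.exists_refines (hPS : IsProductSystem P d src rng mul) {p : G} (hp : p ∈ P)
    {v : Λ} {F : Finset Λ} (hF : ∀ c ∈ F, qle P p (d c) ∧ src c = v) :
    ∃ F' : Finset Λ, (∀ a ∈ F', d a = p ∧ src a = v) ∧ Refines src rng mul F F' := by
  choose! f hfd hfs hfi using fun (c : Λ) (hc : qle P p (d c)) => hPS.exists_isInit hp hc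
  refine ⟨F.image f, fun a ha => ?_, fun c hc =>
    ⟨f c, Finset.mem_image_of_mem f hc, hfi c (hF c hc).1⟩⟩
  obtain ⟨c, hc, rfl⟩ := Finset.mem_image.mp ha
  exact ⟨hfd c (hF c hc).1, (hfs c (hF c hc).1).trans (hF c hc).2⟩

end Paths

/-- The gap projection `t_v - ∑_{a ∈ F} t_a t_a*`, the factor from which the products in condition
(†) are formed. It is defined for all `F`; the case of interest is that all paths of `F` have
source `v` and a common degree. -/
def gap {Λ B : Type*} [NonUnitalRing B] [Star B] (t : Λ → B) (v : Λ) (F : Finset Λ) : B :=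
  t v - ∑ a ∈ F, t a * star (t a)

section Toeplitz

variable {G Λ : Type*} [Group G] {P : Submonoid G} {d : Λ → G} {src rng : Λ → Λ} {mul : Λ → Λ → Λ}
  {B : Type*} [CStarAlgebra B] [PartialOrder B] {t : Λ → B}

namespace IsToeplitzFamily

lemma vertex_mul (hT : IsToeplitzFamily P d src rng mul t)
    (hPS : IsProductSystem P d src rng mul) (a : Λ) : t (src a) * t a = t a := by
  rw [hT.mul_eq _ _ (hPS.rng_vertex _ (hPS.d_src a)), hPS.src_mul_self]

lemma mul_vertex (hT : IsToeplitzFamily P d src rng mul t)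
    (hPS : IsProductSystem P d src rng mul) (a : Λ) : t a * t (rng a) = t a := by
  rw [hT.mul_eq _ _ (hPS.src_vertex _ (hPS.d_rng a)).symm, hPS.mul_rng_self]

lemma star_mul_vertex (hT : IsToeplitzFamily P d src rng mul t)
    (hPS : IsProductSystem P d src rng mul) (a : Λ) : star (t a) * t (src a) = star (t a) := by
  simpa only [star_mul, (hT.vertex_sa _ (hPS.d_src a)).star_eq]
    using congrArg star (hT.vertex_mul hPS a)

lemma vertex_mul_star (hT : IsToeplitzFamily P d src rng mul t)
    (hPS : IsProductSystem P d src rng mul) (a : Λ) : t (rng a) * star (t a) = star (t a) := by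
  simpa only [star_mul, (hT.vertex_sa _ (hPS.d_rng a)).star_eq]
    using congrArg star (hT.mul_vertex hPS a)

lemma vertex_mul_star_self (hT : IsToeplitzFamily P d src rng mul t) {v : Λ} (hv : d v = 1) :
    t v * star (t v) = t v := by
  rw [(hT.vertex_sa v hv).star_eq, hT.vertex_idem v hv]

lemma vertex_mul_gap (hT : IsToeplitzFamily P d src rng mul t)
    (hPS : IsProductSystem P d src rng mul) {v : Λ} (hv : d v = 1) {F : Finset Λ}
    (hF : ∀ a ∈ F, src a = v) : t v * gap t v F = gap t v F := by
  rw [gap, mul_sub, hT.vertex_idem v hv, Finset.mul_sum]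
  congr 1
  refine Finset.sum_congr rfl fun a ha => ?_
  rw [← mul_assoc, ← hF a ha, hT.vertex_mul hPS]

end IsToeplitzFamily

namespace IsTCKFamily

lemma star_mul_eq_zero (hT : IsTCKFamily P d src rng mul t)
    (hPS : IsProductSystem P d src rng mul) (hP : P.IsMulPointed) {μ ν : Λ}
    (hd : d μ = d ν) (hne : μ ≠ ν) : star (t μ) * t ν = 0 := by
  rw [hT.2 μ ν ∅ (by rw [Finset.coe_empty, hPS.MCE_eq_empty_of_d_eq hP hd hne]), Finset.sum_empty]

lemma range_mul_range (hT : IsTCKFamily P d src rng mul t) {μ ν : Λ} {M : Finset Λ}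
    (hM : ↑M = MCE P d src rng mul μ ν) :
    t μ * star (t μ) * (t ν * star (t ν)) = ∑ γ ∈ M, t γ * star (t γ) := by
  calc t μ * star (t μ) * (t ν * star (t ν))
      = t μ * (star (t μ) * t ν) * star (t ν) := by simp only [mul_assoc]
    _ = ∑ γ ∈ M, t μ * t (tail src rng mul μ γ) * star (t ν * t (tail src rng mul ν γ)) := by
      simp only [hT.2 μ ν M hM, Finset.mul_sum, Finset.sum_mul, star_mul, mul_assoc]
    _ = ∑ γ ∈ M, t γ * star (t γ) := Finset.sum_congr rfl fun γ hγ => by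
      obtain ⟨hμ, hν, -⟩ : γ ∈ MCE P d src rng mul μ ν := hM ▸ Finset.mem_coe.mpr hγ
      rw [hT.1.mul_eq _ _ (rng_eq_src_tail hμ), hT.1.mul_eq _ _ (rng_eq_src_tail hν),
        mul_tail hμ, mul_tail hν]

lemma commute_range (hT : IsTCKFamily P d src rng mul t)
    (hFA : FinitelyAligned P d src rng mul) (μ ν : Λ) :
    Commute (t μ * star (t μ)) (t ν * star (t ν)) := by
  have hM : ((hFA μ ν).toFinset : Set Λ) = MCE P d src rng mul μ ν := (hFA μ ν).coe_toFinset
  rw [Commute, SemiconjBy, hT.range_mul_range hM,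
    hT.range_mul_range (hM.trans (MCE_comm P d src rng mul μ ν))]

lemma commute_gap (hT : IsTCKFamily P d src rng mul t)
    (hFA : FinitelyAligned P d src rng mul) {v : Λ} (hv : d v = 1) (F F' : Finset Λ) :
    Commute (gap t v F) (gap t v F') := by
  have hgap : ∀ (x : B) (F : Finset Λ), (∀ a, Commute x (t a * star (t a))) →
      Commute x (gap t v F) := fun x F hx => by
    have hxv : Commute x (t v) := hT.1.vertex_mul_star_self hv ▸ hx v
    exact hxv.sub_right (Commute.sum_right _ _ _ fun a _ => hx a)
  exact hgap _ _ fun a => (hgap _ _ fun b => hT.commute_range hFA a b).symm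

lemma star_mul_sum_range (hT : IsTCKFamily P d src rng mul t)
    (hPS : IsProductSystem P d src rng mul) (hP : P.IsMulPointed) {p : G} {F : Finset Λ}
    (hF : ∀ a ∈ F, d a = p) {a : Λ} (ha : a ∈ F) :
    star (t a) * ∑ b ∈ F, t b * star (t b) = star (t a) := by
  rw [Finset.mul_sum, Finset.sum_eq_single_of_mem a ha]
  · rw [← mul_assoc, hT.1.star_mul_self, hT.1.vertex_mul_star hPS]
  · intro b hb hba
    rw [← mul_assoc, hT.star_mul_eq_zero hPS hP ((hF a ha).trans (hF b hb).symm) hba.symm,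
      zero_mul]

lemma star_mul_gap_eq_zero (hT : IsTCKFamily P d src rng mul t)
    (hPS : IsProductSystem P d src rng mul) (hP : P.IsMulPointed) {v : Λ} {p : G} {F : Finset Λ}
    (hF : ∀ a ∈ F, d a = p ∧ src a = v) {a c : Λ} (ha : a ∈ F) (hac : IsInit src rng mul a c) :
    star (t c) * gap t v F = 0 := by
  have hzero : star (t a) * gap t v F = 0 := by
    rw [gap, mul_sub, hT.star_mul_sum_range hPS hP (fun b hb => (hF b hb).1) ha, ← (hF a ha).2,
      hT.1.star_mul_vertex hPS, sub_self]
  obtain ⟨b, hab, rfl⟩ := hac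
  rw [← hT.1.mul_eq _ _ hab, star_mul, mul_assoc, hzero, mul_zero]

lemma gap_mul_gap_of_refines (hT : IsTCKFamily P d src rng mul t)
    (hPS : IsProductSystem P d src rng mul) (hP : P.IsMulPointed) {v : Λ} (hv : d v = 1) {p : G}
    {F F' : Finset Λ} (hF' : ∀ a ∈ F', d a = p ∧ src a = v) (h : Refines src rng mul F F') :
    gap t v F * gap t v F' = gap t v F' := by
  have hsum : (∑ c ∈ F, t c * star (t c)) * gap t v F' = 0 := by
    rw [Finset.sum_mul]
    refine Finset.sum_eq_zero fun c hc => ?_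
    obtain ⟨a, ha, hac⟩ := h c hc
    rw [mul_assoc, hT.star_mul_gap_eq_zero hPS hP hF' ha hac, mul_zero]
  rw [gap, sub_mul, hsum, sub_zero, hT.1.vertex_mul_gap hPS hv fun a ha => (hF' a ha).2]

lemma prod_gap_mul_prod_gap_of_refines (hT : IsTCKFamily P d src rng mul t)
    (hPS : IsProductSystem P d src rng mul) (hFA : FinitelyAligned P d src rng mul)
    (hP : P.IsMulPointed) {v : Λ} (hv : d v = 1) {L L' : List (Finset Λ)}
    (hL' : ∀ F' ∈ L', ∃ p, ∀ a ∈ F', d a = p ∧ src a = v)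
    (h : ∀ F ∈ L, ∃ F' ∈ L', Refines src rng mul F F') :
    (L.map (gap t v)).prod * (L'.map (gap t v)).prod = (L'.map (gap t v)).prod := by
  refine list_prod_mul_eq_self (List.forall_mem_map.mpr fun F hF => ?_)
  obtain ⟨F', hF', hFF'⟩ := h F hF
  obtain ⟨p, hp⟩ := hL' F' hF'
  refine mul_list_prod_eq_self_of_mem (List.mem_map_of_mem hF') ?_
    (hT.gap_mul_gap_of_refines hPS hP hv hp hFF')
  exact List.forall_mem_map.mpr fun F₁ _ => List.forall_mem_map.mpr fun F₂ _ =>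
    hT.commute_gap hFA hv F₁ F₂

lemma prod_gap_ne_zero_of_refines (hT : IsTCKFamily P d src rng mul t)
    (hPS : IsProductSystem P d src rng mul) (hFA : FinitelyAligned P d src rng mul)
    (hP : P.IsMulPointed) {v : Λ} (hv : d v = 1) {L L' : List (Finset Λ)}
    (hL' : ∀ F' ∈ L', ∃ p, ∀ a ∈ F', d a = p ∧ src a = v)
    (h : ∀ F ∈ L, ∃ F' ∈ L', Refines src rng mul F F') (hne : (L'.map (gap t v)).prod ≠ 0) :
    (L.map (gap t v)).prod ≠ 0 := fun hzero => hne <| by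
  rw [← hT.prod_gap_mul_prod_gap_of_refines hPS hFA hP hv hL' h, hzero, zero_mul]

end IsTCKFamily

end Toeplitz

section Dagger

variable {G Λ : Type*} [Group G] {P : Submonoid G} {d : Λ → G} {src rng : Λ → Λ} {mul : Λ → Λ → Λ}
  {B : Type*} [CStarAlgebra B] {t : Λ → B} {n : ℕ} {x : Fin n → G}

lemma dagger_iff_prod_gap_ne_zero :
    Dagger P d src t ↔ ∀ R : List G, R.Nodup → (∀ p ∈ R, p ∈ P ∧ p ≠ 1) → ∀ v, d v = 1 →
      ∀ Fp : G → Finset Λ, (∀ p ∈ R, ∀ a ∈ Fp p, d a = p ∧ src a = v) →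
        ((R.map Fp).map (gap t v)).prod ≠ 0 := by
  simp only [List.map_map]
  rfl

lemma Dagger.prod_gap_ofFn_ne_zero [PartialOrder B] (hD : Dagger P d src t)
    (hT : IsTCKFamily P d src rng mul t) (hPS : IsProductSystem P d src rng mul)
    (hFA : FinitelyAligned P d src rng mul) (hP : P.IsMulPointed) (hx : ∀ m, x m ∈ P ∧ x m ≠ 1)
    {v : Λ} (hv : d v = 1) {Gm : Fin n → Finset Λ}
    (hGm : ∀ m, ∀ a ∈ Gm m, d a = x m ∧ src a = v) :
    ((List.ofFn Gm).map (gap t v)).prod ≠ 0 := by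
  -- `x` may have repetitions, while (†) has one set `F_p` per degree: merge sets of equal degree.
  let R : List G := (List.ofFn x).dedup
  let Fp (p : G) : Finset Λ := (Finset.univ.filter fun m => x m = p).biUnion Gm
  have hR : ∀ {p}, p ∈ R ↔ ∃ m, x m = p := by simp [R, List.mem_dedup, List.mem_ofFn]
  have hFp : ∀ p, ∀ a ∈ Fp p, d a = p ∧ src a = v := fun p a ha => by
    obtain ⟨m, hm, ham⟩ := Finset.mem_biUnion.mp ha
    exact (Finset.mem_filter.mp hm).2 ▸ hGm m a ham
  refine hT.prod_gap_ne_zero_of_refines hPS hFA hP hv (L' := R.map Fp)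
    (List.forall_mem_map.mpr fun p _ => ⟨p, hFp p⟩)
    (List.forall_mem_ofFn_iff.mpr fun m => ⟨Fp (x m), List.mem_map_of_mem (hR.mpr ⟨m, rfl⟩), ?_⟩)
    (dagger_iff_prod_gap_ne_zero.mp hD R (List.nodup_dedup _) ?_ v hv Fp fun p _ => hFp p)
  · exact hPS.refines_of_subset (Finset.subset_biUnion_of_mem Gm (by simp))
  · rintro p hp
    obtain ⟨m, rfl⟩ := hR.mp hp
    exact hx m

lemma dagger_of_prod_gap_ofFn_ne_zero [PartialOrder B] (hT : IsTCKFamily P d src rng mul t)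
    (hPS : IsProductSystem P d src rng mul) (hFA : FinitelyAligned P d src rng mul)
    (hP : P.IsMulPointed) (hx : ∀ m, x m ∈ P) (hxP : ∀ p ∈ P, p ≠ 1 → ∃ m, qle P (x m) p)
    (hne : ∀ v, d v = 1 → ∀ Gm : Fin n → Finset Λ, (∀ m, ∀ a ∈ Gm m, d a = x m ∧ src a = v) →
      ((List.ofFn Gm).map (gap t v)).prod ≠ 0) :
    Dagger P d src t := by
  refine dagger_iff_prod_gap_ne_zero.mpr fun R _ hR v hv Fp hFp => ?_
  let S (m : Fin n) : Finset Λ := (R.toFinset.biUnion Fp).filter fun c => qle P (x m) (d c)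
  have hS : ∀ m, ∀ c ∈ S m, qle P (x m) (d c) ∧ src c = v := fun m c hc => by
    obtain ⟨hcR, hmc⟩ := Finset.mem_filter.mp hc
    obtain ⟨p, hp, hcp⟩ := Finset.mem_biUnion.mp hcR
    exact ⟨hmc, (hFp p (List.mem_toFinset.mp hp) c hcp).2⟩
  choose Gm hGm hSGm using fun m => hPS.exists_refines (hx m) (hS m)
  refine hT.prod_gap_ne_zero_of_refines hPS hFA hP hv (L' := List.ofFn Gm)
    (List.forall_mem_ofFn_iff.mpr fun m => ⟨x m, hGm m⟩)
    (List.forall_mem_map.mpr fun p hp => ?_) (hne v hv Gm hGm)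
  obtain ⟨m, hm⟩ := hxP p (hR p hp).1 (hR p hp).2
  have hpS : Fp p ⊆ S m := fun c hc => Finset.mem_filter.mpr
    ⟨Finset.mem_biUnion.mpr ⟨p, List.mem_toFinset.mpr hp, hc⟩, (hFp p hp c hc).1 ▸ hm⟩
  exact ⟨Gm m, List.mem_ofFn.mpr ⟨m, rfl⟩, (hSGm m).mono_left hpS⟩

/-- For instance, `P` may be any finitely generated pointed submonoid, with `x` its nontrivial
generators. -/
theorem stmt14_general [PartialOrder B] (hP : P.IsMulPointed) (hx : ∀ m, x m ∈ P ∧ x m ≠ 1)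
    (hxP : ∀ p ∈ P, p ≠ 1 → ∃ m, qle P (x m) p) (hPS : IsProductSystem P d src rng mul)
    (hFA : FinitelyAligned P d src rng mul) (hT : IsTCKFamily P d src rng mul t) :
    Dagger P d src t ↔
      ∀ v, d v = 1 → ∀ Gm : Fin n → Finset Λ, (∀ m, ∀ a ∈ Gm m, d a = x m ∧ src a = v) →
        (List.ofFn fun m => t v - ∑ a ∈ Gm m, t a * star (t a)).prod ≠ 0 := by
  have hprod : ∀ v (Gm : Fin n → Finset Λ),
      (List.ofFn fun m => t v - ∑ a ∈ Gm m, t a * star (t a)).prod =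
        ((List.ofFn Gm).map (gap t v)).prod := fun v Gm => by
    rw [List.map_ofFn]
    rfl
  simp only [hprod]
  exact ⟨fun hD v hv Gm hGm => hD.prod_gap_ofFn_ne_zero hT hPS hFA hP hx hv hGm,
    dagger_of_prod_gap_ofFn_ne_zero hT hPS hFA hP (fun m => (hx m).1) hxP⟩

end Dagger

section PositiveCone

variable {k : ℕ}

lemma isMulPointed_posCone (k : ℕ) : (posCone k).IsMulPointed := fun _ hg hg' =>
  Multiplicative.toAdd.injective <| funext fun i =>
    le_antisymm (neg_nonneg.mp (hg' i)) (hg i)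

lemma egen_mem_posCone (i : Fin k) : egen k i ∈ posCone k := by
  have h : (0 : Fin k → ℤ) ≤ Pi.single i 1 := Pi.single_nonneg.mpr zero_le_one
  exact h

lemma egen_ne_one (i : Fin k) : egen k i ≠ 1 := fun h =>
  one_ne_zero (Pi.single_eq_zero_iff.mp (Multiplicative.ofAdd.injective h))

lemma exists_egen_qle {p : Multiplicative (Fin k → ℤ)} (hp : p ∈ posCone k) (hp1 : p ≠ 1) :
    ∃ m, qle (posCone k) (egen k m) p := by
  obtain ⟨m, hm⟩ : ∃ m, p.toAdd m ≠ 0 := by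
    by_contra! h
    exact hp1 (Multiplicative.toAdd.injective (funext h))
  refine ⟨m, fun j => ?_⟩
  have hj : 0 ≤ p.toAdd j := hp j
  obtain rfl | h := eq_or_ne j m
  · simp only [egen, toAdd_mul, toAdd_inv, toAdd_ofAdd, Pi.add_apply, Pi.neg_apply,
      Pi.single_eq_same]
    lia
  · simpa [egen, h] using hj

end PositiveCone

/-- Lemma 8.3: over `ℕ^k`, condition (†) holds iff it holds with `R = {e_1, …, e_k}`, i.e.
`∏_{m=1}^k (t_v − ∑_{λ∈G_m} t_λ t_λ*) ≠ 0` for all finite `G_m ⊆ s_{e_m}⁻¹(v)`. -/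
theorem stmt14 {k : ℕ} {Λ : Type*}
    (d : Λ → Multiplicative (Fin k → ℤ)) (src rng : Λ → Λ) (mul : Λ → Λ → Λ)
    (hPS : IsProductSystem (posCone k) d src rng mul)
    (hFA : FinitelyAligned (posCone k) d src rng mul)
    {B : Type*} [CStarAlgebra B] [PartialOrder B] [StarOrderedRing B]
    (t : Λ → B) (hT : IsTCKFamily (posCone k) d src rng mul t) :
    Dagger (posCone k) d src t ↔
      (∀ v, d v = 1 → ∀ Gm : Fin k → Finset Λ,
        (∀ m : Fin k, ∀ a ∈ Gm m, d a = egen k m ∧ src a = v) →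
        (List.ofFn fun m : Fin k =>
          t v - ∑ a ∈ Gm m, t a * star (t a)).prod ≠ 0) := by
  exact stmt14_general (isMulPointed_posCone k) (fun m => ⟨egen_mem_posCone m, egen_ne_one m⟩)
    (fun _ hp hp1 => exists_egen_qle hp hp1) hPS hFA hT

end PSG
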